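/- arXiv:math/0503505 — 4 statements merged into one kernel-verified Lean document; each statement's English description precedes it below -/
import Mathlib

section
/- Let k ≥ 1 be an integer and let b : ℝ × ℝ → ℝ be smooth and compactly supported. For ξ ∈ ℂ with Re ξ < 1/k, define F(ξ) = ∫_0^∞ ∫_0^∞ (y₁ y₂^k)^{-ξ} b(y₁, y₂) dy₁ dy₂ (the integral converges absolutely there). Then F extends to a meromorphic function on all of ℂ whose poles are contained in the set { j/k : j ∈ ℕ, j ≥ 1 }; the pole at a point ξ₀ = j/k has order at most 2 if ξ₀ is a positive integer, and order at most 1 otherwise. -/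
open MeasureTheory
open Set Filter Topology

/-- A two-sided Laplace integral with a signed density is holomorphic on the interior of its strip
of absolute convergence. -/
lemma analyticAt_integral_cexp_mul {Ω : Type*} [MeasurableSpace Ω] {μ : Measure Ω} {X g : Ω → ℝ}
    (hX : Measurable X) (hg : Measurable g) {z : ℂ}
    (h : ∀ᶠ t in 𝓝 z.re, Integrable (fun ω => Real.exp (t * X ω) * g ω) μ) :
    AnalyticAt ℂ (fun z : ℂ => ∫ ω, Complex.exp (z * X ω) * g ω ∂μ) z := by
  have posPart : ∀ f : Ω → ℝ, Measurable f →
      (∀ᶠ t in 𝓝 z.re, Integrable (fun ω => Real.exp (t * X ω) * f ω) μ) →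
      AnalyticAt ℂ (ProbabilityTheory.complexMGF X
        (μ.withDensity fun ω => ((f ω).toNNReal : ENNReal))) z := by
    intro f hf hint
    refine ProbabilityTheory.analyticAt_complexMGF (mem_interior_iff_mem_nhds.2 ?_)
    filter_upwards [hint] with t ht
    change Integrable _ _
    rw [integrable_withDensity_iff_integrable_smul hf.real_toNNReal]
    refine ht.pos_part.congr (ae_of_all _ fun ω => ?_)
    simp only [NNReal.smul_def, Real.coe_toNNReal', smul_eq_mul]
    rw [mul_comm (max _ _), mul_max_of_nonneg _ _ (Real.exp_pos _).le, mul_zero]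
  have hneg : ∀ᶠ t in 𝓝 z.re, Integrable (fun ω => Real.exp (t * X ω) * (-g ω)) μ := by
    filter_upwards [h] with t ht
    simpa using ht.neg
  refine ((posPart g hg h).sub (posPart _ hg.neg hneg)).congr ?_
  filter_upwards [Complex.continuous_re.continuousAt.eventually h] with w hw
  have hint : Integrable (fun ω => Complex.exp (w * X ω) * g ω) μ := by
    refine hw.mono (by fun_prop) (ae_of_all _ fun ω => ?_)
    simp [Complex.norm_exp]
  have hpart : ∀ f : Ω → ℝ, Measurable f → (∀ ω, |f ω| ≤ |g ω|) →
      Integrable (fun ω => (f ω).toNNReal • Complex.exp (w * X ω)) μ := by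
    intro f hf hfg
    refine hint.mono (by fun_prop) (ae_of_all _ fun ω => ?_)
    rw [NNReal.smul_def, norm_smul, norm_mul, mul_comm]
    gcongr
    simpa [abs_of_nonneg (le_max_right (f ω) 0)] using (le_abs_self _).trans (hfg ω)
  simp only [Pi.sub_apply, ProbabilityTheory.complexMGF]
  rw [integral_withDensity_eq_integral_smul hg.real_toNNReal,
    integral_withDensity_eq_integral_smul hg.neg.real_toNNReal,
    ← integral_sub (hpart g hg fun _ => le_rfl) (hpart _ hg.neg fun _ => by simp)]
  congr 1 with ω
  simp only [NNReal.smul_def, Real.coe_toNNReal', Complex.real_smul, Pi.neg_apply]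
  rw [← sub_mul, mul_comm, ← Complex.ofReal_sub,
    max_zero_sub_max_neg_zero_eq_self]

lemma exists_forall_notMem_Iic_prod_Iic_eq_zero {b : ℝ × ℝ → ℝ} (hb : HasCompactSupport b) :
    ∃ R : ℝ, ∀ y : ℝ × ℝ, y ∉ Iic R ×ˢ Iic R → b y = 0 := by
  obtain ⟨R, hR⟩ := hb.isBounded.subset_closedBall 0
  refine ⟨R, fun y hy => ?_⟩
  by_contra h
  have := hR (subset_tsupport _ h)
  rw [mem_closedBall_zero_iff, Prod.norm_def, max_le_iff] at this
  exact hy ⟨(le_abs_self _).trans this.1, (le_abs_self _).trans this.2⟩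

lemma integrableOn_cpow_mul_cpow_mul {b : ℝ × ℝ → ℝ} (hb : Continuous b)
    (hbs : HasCompactSupport b) {s t : ℂ} (hs : -1 < s.re) (ht : -1 < t.re) :
    IntegrableOn (fun y : ℝ × ℝ => (y.1 : ℂ) ^ s * (y.2 : ℂ) ^ t * b y)
      (Ioi 0 ×ˢ Ioi 0) := by
  obtain ⟨R, hR⟩ := exists_forall_notMem_Iic_prod_Iic_eq_zero hbs
  have h1 : ∀ {r : ℂ}, -1 < r.re → IntegrableOn (fun x : ℝ => (x : ℂ) ^ r) (Ioc 0 R) :=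
    fun h => (intervalIntegral.intervalIntegrable_cpow' h).1
  have h2 : IntegrableOn (fun y : ℝ × ℝ => (y.1 : ℂ) ^ s * (y.2 : ℂ) ^ t)
      (Ioc 0 R ×ˢ Ioc 0 R) := by
    rw [IntegrableOn, Measure.volume_eq_prod, ← Measure.prod_restrict]
    exact (h1 hs).mul_prod (h1 ht)
  refine (h2.mul_continuousOn_of_subset (g' := fun y => (b y : ℂ)) (by fun_prop)
    (measurableSet_Ioc.prod measurableSet_Ioc) (isCompact_Icc.prod isCompact_Icc)
    (prod_mono Ioc_subset_Icc_self Ioc_subset_Icc_self)).of_forall_sdiff_eq_zero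
    (measurableSet_Ioi.prod measurableSet_Ioi) ?_
  rintro y ⟨⟨h1, h2⟩, h3⟩
  rw [hR y fun h => h3 ⟨⟨h1, h.1⟩, ⟨h2, h.2⟩⟩]
  simp

lemma exists_forall_gt_eq_zero {f : ℝ → ℝ} (hf : HasCompactSupport f) :
    ∃ R : ℝ, ∀ x, R < x → f x = 0 := by
  obtain ⟨R, hR⟩ := hf.isCompact.bddAbove
  exact ⟨R, fun x hx => by_contra fun h => hx.not_ge (hR (subset_tsupport _ h))⟩

lemma mul_integral_cpow_mul {g : ℝ → ℝ} (hg : ContDiff ℝ 1 g) (hgs : HasCompactSupport g)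
    {s : ℂ} (hs : 0 < s.re) :
    s * ∫ x in Ioi (0 : ℝ), (x : ℂ) ^ (s - 1) * g x =
      ∫ x in Ioi (0 : ℝ), (x : ℂ) ^ s * ((-deriv g x : ℝ) : ℂ) := by
  have hs0 : s ≠ 0 := by rintro rfl; simp at hs
  have key : ∀ {f : ℝ → ℝ}, Continuous f → HasCompactSupport f → ∀ {r : ℂ}, -1 < r.re →
      IntegrableOn (fun x : ℝ => (x : ℂ) ^ r * f x) (Ioi 0) := by
    intro f hf hfs r hr
    obtain ⟨R, hR⟩ := exists_forall_gt_eq_zero hfs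
    refine ((intervalIntegral.intervalIntegrable_cpow' (a := 0) (b := R)
      hr).1.mul_continuousOn_of_subset (g' := fun y => (f y : ℂ)) (by fun_prop)
      measurableSet_Ioc isCompact_Icc Ioc_subset_Icc_self).of_forall_sdiff_eq_zero
      measurableSet_Ioi ?_
    rintro x ⟨h1, h3⟩
    simp [hR x (not_le.1 fun h => h3 ⟨h1, h⟩)]
  have hcont : Continuous fun x : ℝ => (x : ℂ) ^ s := Complex.continuous_ofReal_cpow_const hs
  have h0 : Tendsto ((fun x : ℝ => (x : ℂ) ^ s) * fun x => (g x : ℂ)) (𝓝[>] 0) (𝓝 0) := by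
    have : Continuous ((fun x : ℝ => (x : ℂ) ^ s) * fun x => (g x : ℂ)) :=
      hcont.mul (Complex.continuous_ofReal.comp hg.continuous)
    have h := (this.tendsto 0).mono_left (nhdsWithin_le_nhds (s := Ioi 0))
    simpa [hs0] using h
  have hinf : Tendsto ((fun x : ℝ => (x : ℂ) ^ s) * fun x => (g x : ℂ)) atTop (𝓝 0) := by
    obtain ⟨R, hR⟩ := exists_forall_gt_eq_zero hgs
    refine tendsto_const_nhds.congr' ?_
    filter_upwards [eventually_gt_atTop R] with x hx
    simp [hR x hx]
  have := integral_Ioi_mul_deriv_eq_deriv_mul (a := (0 : ℝ)) (u := fun x : ℝ => (x : ℂ) ^ s)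
    (v := fun x => (g x : ℂ)) (u' := fun x : ℝ => s * (x : ℂ) ^ (s - 1))
    (v' := fun x => ((deriv g x : ℝ) : ℂ))
    (fun x hx => hasDerivAt_ofReal_cpow_const (ne_of_gt hx) hs0)
    (fun x hx => ((hg.differentiable one_ne_zero).differentiableAt.hasDerivAt).ofReal_comp)
    (key hg.continuous_deriv_one hgs.deriv (by linarith))
    (by simpa [IntegrableOn, Pi.mul_def, mul_assoc] using
      (key hg.continuous hgs (r := s - 1) (by simpa using hs)).const_mul s) h0 hinf
  simp only [Complex.ofReal_neg, mul_neg, integral_neg, this, mul_assoc, integral_const_mul]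
  ring

/-- The Mellin transform over the open quadrant, as a function of two complex exponents. -/
noncomputable def quadrantMellin (b : ℝ × ℝ → ℝ) (s t : ℂ) : ℂ :=
  ∫ y in Ioi (0 : ℝ) ×ˢ Ioi (0 : ℝ), (y.1 : ℂ) ^ (s - 1) * (y.2 : ℂ) ^ (t - 1) * b y

/-- The opposite of the derivative of `b` in the direction `v`. -/
noncomputable def negDirDeriv (v : ℝ × ℝ) (b : ℝ × ℝ → ℝ) (y : ℝ × ℝ) : ℝ := -fderiv ℝ b y v

/-- Smooth functions with compact support. -/
def IsTestFunction (b : ℝ × ℝ → ℝ) : Prop := ContDiff ℝ (⊤ : ℕ∞) b ∧ HasCompactSupport b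

lemma IsTestFunction.negDirDeriv {b : ℝ × ℝ → ℝ} (hb : IsTestFunction b) (v : ℝ × ℝ) :
    IsTestFunction (negDirDeriv v b) :=
  ⟨((hb.1.fderiv_right (m := (⊤ : ℕ∞)) (by simp)).clm_apply contDiff_const).neg,
    (hb.2.fderiv_apply ℝ v).neg⟩

lemma IsTestFunction.comp_swap {b : ℝ × ℝ → ℝ} (hb : IsTestFunction b) :
    IsTestFunction (b ∘ Prod.swap) :=
  ⟨hb.1.comp (contDiff_snd.prodMk contDiff_fst),
    hb.2.comp_homeomorph (Homeomorph.prodComm ℝ ℝ)⟩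

lemma quadrantMellin_comp_swap (b : ℝ × ℝ → ℝ) (s t : ℂ) :
    quadrantMellin (b ∘ Prod.swap) t s = quadrantMellin b s t := by
  unfold quadrantMellin
  rw [Measure.volume_eq_prod, ← setIntegral_prod_swap]
  simp [mul_comm]

lemma negDirDeriv_comp_swap (b : ℝ × ℝ → ℝ) (v : ℝ × ℝ) :
    negDirDeriv v (b ∘ Prod.swap) = negDirDeriv v.swap b ∘ Prod.swap := by
  ext y
  have := (ContinuousLinearEquiv.prodComm ℝ ℝ ℝ).comp_right_fderiv (f := b) (x := y)
  unfold negDirDeriv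
  exact congrArg Neg.neg (congrArg (fun L : ℝ × ℝ →L[ℝ] ℝ => L v) this)

lemma mul_quadrantMellin_snd {b : ℝ × ℝ → ℝ} (hb : IsTestFunction b) {s t : ℂ}
    (hs : 0 < s.re) (ht : 0 < t.re) :
    t * quadrantMellin b s t = quadrantMellin (negDirDeriv (0, 1) b) s (t + 1) := by
  have hb' := hb.negDirDeriv (0, 1)
  unfold quadrantMellin
  rw [Measure.volume_eq_prod, setIntegral_prod, setIntegral_prod, ← integral_const_mul]
  rotate_left
  · exact integrableOn_cpow_mul_cpow_mul hb'.1.continuous hb'.2 (by simpa) (by simp; linarith)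
  · exact integrableOn_cpow_mul_cpow_mul hb.1.continuous hb.2 (by simpa) (by simpa)
  refine setIntegral_congr_fun measurableSet_Ioi fun x _ => ?_
  have hline : ∀ y, HasDerivAt (fun y : ℝ => (x, y)) (0, 1) y := fun y =>
    (hasDerivAt_const y x).prodMk (hasDerivAt_id y)
  have hsupp : HasCompactSupport fun y => b (x, y) :=
    hb.2.comp_isClosedEmbedding
      (Isometry.of_dist_eq fun y z => by simp [Prod.dist_eq]).isClosedEmbedding
  have hparts := mul_integral_cpow_mul (g := fun y => b (x, y))
    ((hb.1.of_le (by simp)).comp (contDiff_const.prodMk contDiff_id)) hsupp ht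
  have hderiv : ∀ y, -deriv (fun y => b (x, y)) y = negDirDeriv (0, 1) b (x, y) := fun y => by
    rw [negDirDeriv, ← (((hb.1.differentiable (by simp)) (x, y)).hasFDerivAt.comp_hasDerivAt y
      (hline y)).deriv]
    rfl
  simp only [hderiv] at hparts
  simp only [mul_assoc, integral_const_mul, add_sub_cancel_right, ← hparts]
  ring

lemma mul_quadrantMellin_fst {b : ℝ × ℝ → ℝ} (hb : IsTestFunction b) {s t : ℂ}
    (hs : 0 < s.re) (ht : 0 < t.re) :
    s * quadrantMellin b s t = quadrantMellin (negDirDeriv (1, 0) b) (s + 1) t := by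
  rw [← quadrantMellin_comp_swap, mul_quadrantMellin_snd hb.comp_swap ht hs,
    negDirDeriv_comp_swap, quadrantMellin_comp_swap]
  rfl

/-- The Mellin transform over the quadrant divided by `Γ(s) Γ(t)`. -/
noncomputable def normalizedMellin (b : ℝ × ℝ → ℝ) (s t : ℂ) : ℂ :=
  (Complex.Gamma s)⁻¹ * (Complex.Gamma t)⁻¹ * quadrantMellin b s t

lemma normalizedMellin_fst {b : ℝ × ℝ → ℝ} (hb : IsTestFunction b) {s t : ℂ}
    (hs : 0 < s.re) (ht : 0 < t.re) :
    normalizedMellin b s t = normalizedMellin (negDirDeriv (1, 0) b) (s + 1) t := by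
  unfold normalizedMellin
  rw [← mul_quadrantMellin_fst hb hs ht,
    Complex.one_div_Gamma_eq_self_mul_one_div_Gamma_add_one s]
  ring

lemma normalizedMellin_snd {b : ℝ × ℝ → ℝ} (hb : IsTestFunction b) {s t : ℂ}
    (hs : 0 < s.re) (ht : 0 < t.re) :
    normalizedMellin b s t = normalizedMellin (negDirDeriv (0, 1) b) s (t + 1) := by
  unfold normalizedMellin
  rw [← mul_quadrantMellin_snd hb hs ht,
    Complex.one_div_Gamma_eq_self_mul_one_div_Gamma_add_one t]
  ring

lemma IsTestFunction.negDirDeriv_iterate {b : ℝ × ℝ → ℝ} (hb : IsTestFunction b) (v : ℝ × ℝ)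
    (n : ℕ) : IsTestFunction ((_root_.negDirDeriv v)^[n] b) := by
  induction n with
  | zero => exact hb
  | succ n ih => rw [Function.iterate_succ_apply']; exact ih.negDirDeriv v

lemma normalizedMellin_snd_iterate {b : ℝ × ℝ → ℝ} (hb : IsTestFunction b) {s t : ℂ}
    (hs : 0 < s.re) (ht : 0 < t.re) (n : ℕ) :
    normalizedMellin b s t = normalizedMellin ((negDirDeriv (0, 1))^[n] b) s (t + n) := by
  induction n with
  | zero => simp
  | succ n ih =>
    rw [ih, Function.iterate_succ_apply', normalizedMellin_snd (hb.negDirDeriv_iterate _ n) hs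
      (by simp; positivity)]
    push_cast
    ring_nf

/-- The operator `∂₁ ∂₂ᵏ` up to sign. -/
noncomputable def mixedDeriv (k : ℕ) (b : ℝ × ℝ → ℝ) : ℝ × ℝ → ℝ :=
  (negDirDeriv (0, 1))^[k] (negDirDeriv (1, 0) b)

lemma IsTestFunction.mixedDeriv_iterate {b : ℝ × ℝ → ℝ} (hb : IsTestFunction b) (k n : ℕ) :
    IsTestFunction ((mixedDeriv k)^[n] b) := by
  induction n with
  | zero => exact hb
  | succ n ih =>
    rw [Function.iterate_succ_apply']
    exact (ih.negDirDeriv _).negDirDeriv_iterate _ _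

lemma normalizedMellin_mixedDeriv {b : ℝ × ℝ → ℝ} (hb : IsTestFunction b) (k : ℕ) {s t : ℂ}
    (hs : 0 < s.re) (ht : 0 < t.re) :
    normalizedMellin b s t = normalizedMellin (mixedDeriv k b) (s + 1) (t + k) := by
  rw [normalizedMellin_fst hb hs ht, normalizedMellin_snd_iterate (hb.negDirDeriv _)
    (by simp; positivity) ht k, mixedDeriv]

lemma cpow_mul_pow {x y : ℝ} (hx : 0 < x) (hy : 0 < y) (k : ℕ) (w : ℂ) :
    ((x * y ^ k : ℝ) : ℂ) ^ w = (x : ℂ) ^ w * (y : ℂ) ^ (k * w) := by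
  push_cast
  have := Complex.mul_cpow_ofReal_nonneg hx.le (pow_nonneg hy.le k) w
  push_cast at this
  rw [this, Complex.cpow_nat_mul' (by simpa [Complex.arg_ofReal_of_nonneg hy.le] using Real.pi_pos)
    (by simpa [Complex.arg_ofReal_of_nonneg hy.le] using Real.pi_pos.le)]

lemma quadrantMellin_eq_setIntegral (b : ℝ × ℝ → ℝ) (k : ℕ) (w : ℂ) :
    quadrantMellin b (w + 1) (k * w + 1) =
      ∫ y in Ioi (0 : ℝ) ×ˢ Ioi (0 : ℝ), ((y.1 * y.2 ^ k : ℝ) : ℂ) ^ w * b y := by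
  refine setIntegral_congr_fun (measurableSet_Ioi.prod measurableSet_Ioi) fun y hy => ?_
  simp only [add_sub_cancel_right, cpow_mul_pow hy.1 hy.2]

lemma integrableOn_cpow_mul {b : ℝ × ℝ → ℝ} (hb : Continuous b) (hbs : HasCompactSupport b)
    {k : ℕ} (hk : 1 ≤ k) {w : ℂ} (hw : -1 < k * w.re) :
    IntegrableOn (fun y : ℝ × ℝ => ((y.1 * y.2 ^ k : ℝ) : ℂ) ^ w * b y) (Ioi 0 ×ˢ Ioi 0) := by
  have hk' : (1 : ℝ) ≤ k := by exact_mod_cast hk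
  have hw' : -1 < w.re := by
    by_contra! h
    nlinarith
  refine (integrableOn_cpow_mul_cpow_mul hb hbs (s := w) (t := k * w) hw'
    (by simpa using hw)).congr_fun (fun y hy => ?_) (measurableSet_Ioi.prod measurableSet_Ioi)
  simp only [cpow_mul_pow hy.1 hy.2]

lemma analyticAt_quadrantMellin {b : ℝ × ℝ → ℝ} (hb : Continuous b) (hbs : HasCompactSupport b)
    {k : ℕ} (hk : 1 ≤ k) {w : ℂ} (hw : -1 < k * w.re) :
    AnalyticAt ℂ (fun w : ℂ => quadrantMellin b (w + 1) (k * w + 1)) w := by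
  have hexp : ∀ y ∈ Ioi (0 : ℝ) ×ˢ Ioi (0 : ℝ), ∀ z : ℂ, ((y.1 * y.2 ^ k : ℝ) : ℂ) ^ z =
      Complex.exp (z * Real.log (y.1 * y.2 ^ k)) := fun y hy z => by
    have hpos : 0 < y.1 * y.2 ^ k := mul_pos hy.1 (pow_pos hy.2 k)
    rw [Complex.cpow_def_of_ne_zero (by exact_mod_cast hpos.ne'), Complex.ofReal_log hpos.le,
      mul_comm]
  have hQ : MeasurableSet (Ioi (0 : ℝ) ×ˢ Ioi (0 : ℝ)) := measurableSet_Ioi.prod measurableSet_Ioi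
  have heq : (fun w : ℂ => quadrantMellin b (w + 1) (k * w + 1)) = fun z : ℂ =>
      ∫ y in Ioi (0 : ℝ) ×ˢ Ioi (0 : ℝ),
        Complex.exp (z * Real.log (y.1 * y.2 ^ k)) * b y := by
    ext z
    rw [quadrantMellin_eq_setIntegral]
    exact setIntegral_congr_fun hQ fun y hy => by simp only [hexp y hy]
  rw [heq]
  refine analyticAt_integral_cexp_mul (X := fun y : ℝ × ℝ => Real.log (y.1 * y.2 ^ k))
    (by fun_prop) hb.measurable ?_
  have hev : ∀ᶠ t : ℝ in 𝓝 w.re, -1 < k * t :=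
    (continuous_const.mul continuous_id).continuousAt.eventually (lt_mem_nhds hw)
  filter_upwards [hev] with t ht
  have hint := (integrableOn_cpow_mul hb hbs hk (w := (t : ℂ)) (by simpa using ht)).re
  refine IntegrableOn.congr_fun hint (fun y hy => ?_) hQ
  simp only [hexp y hy]
  norm_cast

/-- Holomorphic functions on the half-planes `re ξ < n + c` that agree on overlaps glue to an
entire function. -/
lemma exists_entire_of_halfPlanes {f : ℕ → ℂ → ℂ} {c : ℝ} (hc : 0 < c)
    (hf : ∀ (n : ℕ) (ξ : ℂ), ξ.re < n + c → AnalyticAt ℂ (f n) ξ)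
    (hstep : ∀ (n : ℕ) (ξ : ℂ), ξ.re < n + c → f n ξ = f (n + 1) ξ) :
    ∃ E : ℂ → ℂ, (∀ ξ, AnalyticAt ℂ E ξ) ∧ ∀ ξ, ξ.re < c → E ξ = f 0 ξ := by
  have hadd : ∀ n m : ℕ, ∀ ξ : ℂ, ξ.re < n + c → f n ξ = f (n + m) ξ := by
    intro n m ξ hξ
    induction m with
    | zero => rfl
    | succ m ih =>
      rw [ih, hstep (n + m) ξ (by push_cast; linarith [(Nat.cast_nonneg m : (0 : ℝ) ≤ m)])]
      rfl
  have hceil : ∀ n : ℕ, ∀ ξ : ℂ, ξ.re < n + c → f ⌈ξ.re⌉₊ ξ = f n ξ := by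
    intro n ξ hξ
    have hle : ξ.re < ⌈ξ.re⌉₊ + c := by linarith [Nat.le_ceil ξ.re]
    rcases le_total n ⌈ξ.re⌉₊ with h | h
    · rw [hadd n (⌈ξ.re⌉₊ - n) ξ hξ, Nat.add_sub_cancel' h]
    · rw [hadd _ (n - ⌈ξ.re⌉₊) ξ hle, Nat.add_sub_cancel' h]
  refine ⟨fun ξ => f ⌈ξ.re⌉₊ ξ, fun ξ => ?_, fun ξ hξ => hceil 0 ξ (by simpa using hξ)⟩
  have hle : ξ.re < ⌈ξ.re⌉₊ + c := by linarith [Nat.le_ceil ξ.re]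
  refine (hf _ ξ hle).congr ?_
  filter_upwards [Complex.continuous_re.continuousAt.eventually (gt_mem_nhds hle)] with z hz
  exact (hceil _ z hz).symm

lemma exists_entire_eq_normalizedMellin {b : ℝ × ℝ → ℝ} (hb : IsTestFunction b) {k : ℕ}
    (hk : 1 ≤ k) :
    ∃ E : ℂ → ℂ, (∀ ξ, AnalyticAt ℂ E ξ) ∧
      ∀ ξ : ℂ, ξ.re < 1 / k → E ξ = normalizedMellin b (-ξ + 1) (k * -ξ + 1) := by
  have hk0 : (0 : ℝ) < k := by exact_mod_cast hk
  have hk1 : (1 : ℝ) ≤ k := by exact_mod_cast hk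
  have hre : ∀ (n : ℕ) (ξ : ℂ), ξ.re < n + 1 / k → -1 < k * (n - ξ : ℂ).re := by
    intro n ξ hξ
    have := mul_lt_mul_of_pos_left hξ hk0
    rw [mul_add, mul_one_div_cancel hk0.ne'] at this
    simp only [Complex.sub_re, Complex.natCast_re]
    linarith
  have hG : Differentiable ℂ fun s : ℂ => (Complex.Gamma s)⁻¹ :=
    Complex.differentiable_one_div_Gamma
  obtain ⟨E, hE, hE0⟩ := exists_entire_of_halfPlanes (c := 1 / k) (by positivity)
    (f := fun n ξ => normalizedMellin ((mixedDeriv k)^[n] b) ((n - ξ) + 1) (k * (n - ξ) + 1))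
    (fun n ξ hξ => by
      have hbn := hb.mixedDeriv_iterate k n
      have hsub : AnalyticAt ℂ (fun ξ : ℂ => (n : ℂ) - ξ) ξ := analyticAt_const.sub analyticAt_id
      exact (((hG.analyticAt _).fun_comp (hsub.add analyticAt_const)).mul
        ((hG.analyticAt _).fun_comp ((analyticAt_const.mul hsub).add analyticAt_const))).mul
        ((analyticAt_quadrantMellin hbn.1.continuous hbn.2 hk (hre n ξ hξ)).fun_comp hsub))
    (fun n ξ hξ => by
      have h := hre n ξ hξ
      have h' : -1 < (n - ξ : ℂ).re := by
        by_contra! h''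
        nlinarith
      rw [Function.iterate_succ_apply', normalizedMellin_mixedDeriv (hb.mixedDeriv_iterate k n) k]
      · push_cast
        ring_nf
      · rw [Complex.add_re, Complex.one_re]; linarith
      · rw [Complex.add_re, Complex.one_re, ← Complex.ofReal_natCast, Complex.re_ofReal_mul]
        linarith)
  exact ⟨E, hE, fun ξ hξ => by simpa using hE0 ξ hξ⟩

lemma analyticAt_Gamma_one_sub {z : ℂ} (hz : ∀ n : ℕ, 1 ≤ n → z ≠ n) :
    AnalyticAt ℂ (fun z => Complex.Gamma (1 - z)) z := by
  have h : AnalyticAt ℂ (fun z : ℂ => (Complex.Gamma (1 - z))⁻¹) z :=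
    (Complex.differentiable_one_div_Gamma.analyticAt _).fun_comp (analyticAt_const.sub analyticAt_id)
  have h0 : Complex.Gamma (1 - z) ≠ 0 := Complex.Gamma_ne_zero fun m hm =>
    hz (m + 1) (by omega) (by push_cast; linear_combination -hm)
  simpa [Pi.inv_def] using h.inv (inv_ne_zero h0)

lemma exists_analyticAt_eq_sub_mul_Gamma {n : ℕ} (hn : 1 ≤ n) :
    ∃ φ : ℂ → ℂ, AnalyticAt ℂ φ n ∧
      ∀ᶠ z in 𝓝[≠] (n : ℂ), φ z = (z - n) * Complex.Gamma (1 - z) := by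
  induction n, hn using Nat.le_induction with
  | base =>
    refine ⟨fun z => -Complex.Gamma (1 - (z - 1)), ?_, ?_⟩
    · refine (AnalyticAt.fun_comp (g := fun z => Complex.Gamma (1 - z))
        (analyticAt_Gamma_one_sub fun m hm h => ?_) (analyticAt_id.sub analyticAt_const)).neg
      have : (m : ℂ) = 0 := by rw [← h]; simp
      norm_cast at this
      omega
    · filter_upwards [self_mem_nhdsWithin] with z hz
      have := Complex.Gamma_add_one (1 - z) (sub_ne_zero.2 fun h => hz (by simp [h]))
      rw [show 1 - (z - 1) = 1 - z + 1 by ring, this]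
      push_cast
      ring
  | succ n hn ih =>
    obtain ⟨φ, hφ, heq⟩ := ih
    have hne : (n + 1 : ℂ) ≠ 1 := by
      have : (n : ℂ) ≠ 0 := by exact_mod_cast (by omega : n ≠ 0)
      simpa using this
    refine ⟨fun z => φ (z - 1) / (1 - z), ?_, ?_⟩
    · refine AnalyticAt.div (hφ.fun_comp_of_eq (analyticAt_id.sub analyticAt_const) (by simp))
        (analyticAt_const.sub analyticAt_id) ?_
      push_cast
      exact sub_ne_zero.2 hne.symm
    · have ht : Tendsto (fun z : ℂ => z - 1) (𝓝[≠] ((n + 1 : ℕ) : ℂ)) (𝓝[≠] (n : ℂ)) := by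
        refine tendsto_nhdsWithin_iff.2 ⟨?_, ?_⟩
        · have : Tendsto (fun z : ℂ => z - 1) (𝓝 ((n + 1 : ℕ) : ℂ)) (𝓝 (((n + 1 : ℕ) : ℂ) - 1)) :=
            (continuous_id.sub continuous_const).tendsto _
          simpa using this.mono_left nhdsWithin_le_nhds
        · filter_upwards [self_mem_nhdsWithin] with z hz h
          exact hz (by push_cast; exact sub_eq_iff_eq_add.1 h)
      have h1 : ∀ᶠ z in 𝓝[≠] ((n + 1 : ℕ) : ℂ), z ≠ 1 :=
        nhdsWithin_le_nhds (isOpen_ne.mem_nhds (by push_cast; exact hne))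
      filter_upwards [ht.eventually heq, h1] with z hz hz1
      have hz1' : 1 - z ≠ 0 := sub_ne_zero.2 hz1.symm
      have := Complex.Gamma_add_one (1 - z) hz1'
      rw [hz, show 1 - (z - 1) = 1 - z + 1 by ring, this]
      field_simp
      push_cast
      ring

lemma exists_analyticAt_eq_of_eventually {f φ : ℂ → ℂ} {c : ℂ} (hφ : AnalyticAt ℂ φ c)
    (h : ∀ᶠ z in 𝓝[≠] c, φ z = f z) :
    ∃ H : ℂ → ℂ, AnalyticAt ℂ H c ∧ ∀ z, z ≠ c → H z = f z := by
  refine ⟨Function.update f c (φ c), hφ.congr ?_, fun z hz => Function.update_of_ne hz _ _⟩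
  filter_upwards [eventually_nhdsWithin_iff.1 h] with z hz
  rcases eq_or_ne z c with rfl | hne
  · simp
  · rw [Function.update_of_ne hne, hz hne]

lemma exists_analyticAt_eq_sub_mul_Gamma_mul {j k : ℕ} (hj : 1 ≤ j) (hk : 1 ≤ k) :
    ∃ φ : ℂ → ℂ, AnalyticAt ℂ φ ((j : ℂ) / k) ∧
      ∀ᶠ z in 𝓝[≠] ((j : ℂ) / k), φ z = (z - j / k) * Complex.Gamma (1 - k * z) := by
  have hk0 : (k : ℂ) ≠ 0 := by exact_mod_cast (by omega : k ≠ 0)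
  obtain ⟨φ, hφ, heq⟩ := exists_analyticAt_eq_sub_mul_Gamma hj
  have hval : (k : ℂ) * (j / k) = j := mul_div_cancel₀ _ hk0
  refine ⟨fun z => (k : ℂ)⁻¹ * φ (k * z),
    analyticAt_const.mul (hφ.fun_comp_of_eq (analyticAt_const.mul analyticAt_id) hval), ?_⟩
  have ht : Tendsto (fun z : ℂ => k * z) (𝓝[≠] ((j : ℂ) / k)) (𝓝[≠] (j : ℂ)) := by
    refine tendsto_nhdsWithin_iff.2 ⟨?_, ?_⟩
    · have := (continuous_const_mul (k : ℂ)).tendsto ((j : ℂ) / k)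
      rw [hval] at this
      exact this.mono_left nhdsWithin_le_nhds
    · filter_upwards [self_mem_nhdsWithin] with z hz h
      exact hz ((eq_div_iff hk0).2 ((mul_comm _ _).trans h))
  filter_upwards [ht.eventually heq] with z hz
  rw [hz]
  field_simp

/-- The function `F(ξ) = ∫_0^∞∫_0^∞ (y₁ y₂^k)^{-ξ} b(y₁,y₂) dy₁ dy₂`, absolutely convergent
for `Re ξ < 1/k`, extends meromorphically to `ℂ` with poles contained in `{j/k : j ∈ ℕ*}`,
of order at most 2 at positive integers and at most 1 elsewhere. -/
theorem meromorphic_extension_of_power_integral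
    (k : ℕ) (hk : 1 ≤ k) (b : ℝ × ℝ → ℝ)
    (hb : ContDiff ℝ (⊤ : ℕ∞) b) (hbsupp : HasCompactSupport b) :
    (∀ ξ : ℂ, ξ.re < 1 / k →
      IntegrableOn (fun y : ℝ × ℝ =>
        ((y.1 * y.2 ^ k : ℝ) : ℂ) ^ (-ξ) * (b y : ℂ))
        (Set.Ioi 0 ×ˢ Set.Ioi 0)) ∧
    ∃ G : ℂ → ℂ,
      (∀ ξ : ℂ, (∀ j : ℕ, 1 ≤ j → ξ ≠ (j : ℂ) / (k : ℂ)) → AnalyticAt ℂ G ξ) ∧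
      (∀ ξ : ℂ, ξ.re < 1 / k →
        G ξ = ∫ y in Set.Ioi (0:ℝ) ×ˢ Set.Ioi (0:ℝ),
          ((y.1 * y.2 ^ k : ℝ) : ℂ) ^ (-ξ) * (b y : ℂ)) ∧
      (∀ j : ℕ, 1 ≤ j →
        ∃ H : ℂ → ℂ, AnalyticAt ℂ H ((j : ℂ) / (k : ℂ)) ∧
          ∀ ξ : ℂ, ξ ≠ (j : ℂ) / (k : ℂ) →
            H ξ = (ξ - (j : ℂ) / (k : ℂ)) ^ (if k ∣ j then 2 else 1) * G ξ) := by
  have hk0 : (k : ℂ) ≠ 0 := by exact_mod_cast (by omega : k ≠ 0)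
  have hkpos : (0 : ℝ) < k := by exact_mod_cast hk
  have hk1 : (1 : ℝ) ≤ k := by exact_mod_cast hk
  have hre : ∀ ξ : ℂ, ξ.re < 1 / k → k * ξ.re < 1 := fun ξ hξ => by
    rw [mul_comm]
    exact (lt_div_iff₀ hkpos).1 hξ
  refine ⟨fun ξ hξ => integrableOn_cpow_mul hb.continuous hbsupp hk
    (by simpa using hre ξ hξ), ?_⟩
  obtain ⟨E, hE, hE0⟩ := exists_entire_eq_normalizedMellin ⟨hb, hbsupp⟩ hk
  have hΓ : ∀ ξ : ℂ, (∀ j : ℕ, 1 ≤ j → ξ ≠ j / k) →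
      AnalyticAt ℂ (fun z : ℂ => Complex.Gamma (1 - k * z)) ξ := fun ξ hξ =>
    AnalyticAt.fun_comp (g := fun z => Complex.Gamma (1 - z))
      (analyticAt_Gamma_one_sub fun n hn h => hξ n hn
        ((eq_div_iff hk0).2 ((mul_comm _ _).trans h))) (analyticAt_const.mul analyticAt_id)
  refine ⟨fun ξ => Complex.Gamma (1 - ξ) * Complex.Gamma (1 - k * ξ) * E ξ,
    fun ξ hξ => ?_, fun ξ hξ => ?_, fun j hj => ?_⟩
  · refine ((analyticAt_Gamma_one_sub fun n hn h => ?_).mul (hΓ ξ hξ)).mul (hE ξ)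
    refine hξ (n * k) (Nat.mul_pos hn hk) ?_
    rw [h, Nat.cast_mul, mul_div_cancel_right₀ _ hk0]
  · have h := hre ξ hξ
    have h1 : 0 < (1 - ξ).re := by
      rw [Complex.sub_re, Complex.one_re]
      by_contra! h'
      nlinarith
    have h2 : 0 < (1 - k * ξ).re := by
      simpa using h
    simp only [hE0 ξ hξ]
    rw [normalizedMellin, quadrantMellin_eq_setIntegral, mul_neg, neg_add_eq_sub,
      neg_add_eq_sub, ← mul_inv, mul_inv_cancel_left₀ (mul_ne_zero
        (Complex.Gamma_ne_zero_of_re_pos h1) (Complex.Gamma_ne_zero_of_re_pos h2))]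
  · obtain ⟨φ, hφ, hφeq⟩ := exists_analyticAt_eq_sub_mul_Gamma_mul hj hk
    split_ifs with hdvd
    · obtain ⟨n, rfl⟩ := hdvd
      have hn : 1 ≤ n := Nat.pos_of_ne_zero fun h => by simp [h] at hj
      have hval : ((k * n : ℕ) : ℂ) / k = n := by rw [Nat.cast_mul, mul_div_cancel_left₀ _ hk0]
      obtain ⟨ψ, hψ, hψeq⟩ := exists_analyticAt_eq_sub_mul_Gamma hn
      rw [hval] at hφ hφeq ⊢
      refine exists_analyticAt_eq_of_eventually ((hψ.mul hφ).mul (hE _)) ?_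
      filter_upwards [hφeq, hψeq] with z h1 h2
      simp only [Pi.mul_apply, h1, h2]
      ring
    · have hΓ1 : AnalyticAt ℂ (fun z => Complex.Gamma (1 - z)) ((j : ℂ) / k) :=
        analyticAt_Gamma_one_sub fun n _ h => hdvd ⟨n, by
          rw [div_eq_iff hk0] at h
          rw [mul_comm]
          exact_mod_cast h⟩
      refine exists_analyticAt_eq_of_eventually ((hΓ1.mul hφ).mul (hE _)) ?_
      filter_upwards [hφeq] with z h1
      simp only [Pi.mul_apply, h1]
      ring
end

section
/- Let k ≥ 1 be an integer and ξ ∈ ℂ. Then for all y₁ > 0 and y₂ > 0, the Bernstein–Sato identity holds: ∂_{y₂} ∂_{y₁}^k ( (y₂ y₁^k)^{1−ξ} ) = b_k(ξ) · (y₂ y₁^k)^{-ξ}, where b_k(ξ) = (1−ξ) ∏_{j=1}^{k} (j − kξ). -/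
/-- The derivative of a complex power at a positive real, without restriction on the exponent. -/
theorem hasDerivAt_ofReal_cpow_of_pos {x : ℝ} (hx : 0 < x) (c : ℂ) :
    HasDerivAt (fun r : ℝ => (r : ℂ) ^ c) (c * (x : ℂ) ^ (c - 1)) x := by
  rcases eq_or_ne c 0 with rfl | hc
  · simpa using hasDerivAt_const x (1 : ℂ)
  · exact hasDerivAt_ofReal_cpow_const hx.ne' hc

theorem iteratedDeriv_ofReal_cpow_of_pos (c : ℂ) (n : ℕ) {x : ℝ} (hx : 0 < x) :
    iteratedDeriv n (fun r : ℝ => (r : ℂ) ^ c) x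
      = (∏ i ∈ Finset.range n, (c - i)) * (x : ℂ) ^ (c - n) := by
  induction n generalizing x with
  | zero => simp
  | succ n ih =>
    have hev : iteratedDeriv n (fun r : ℝ => (r : ℂ) ^ c) =ᶠ[nhds x]
        fun r : ℝ => (∏ i ∈ Finset.range n, (c - i)) * (r : ℂ) ^ (c - n) := by
      filter_upwards [lt_mem_nhds hx] with r hr using ih hr
    rw [iteratedDeriv_succ, hev.deriv_eq,
      ((hasDerivAt_ofReal_cpow_of_pos hx (c - n)).const_mul _).deriv,
      Finset.prod_range_succ, Nat.cast_succ, sub_sub, mul_assoc]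

theorem ofReal_mul_pow_cpow {s r : ℝ} (hs : 0 < s) (hr : 0 < r) (k : ℕ) (a : ℂ) :
    ((s * r ^ k : ℝ) : ℂ) ^ a = (s : ℂ) ^ a * (r : ℂ) ^ (k * a) := by
  rw [Complex.ofReal_mul, Complex.mul_cpow_ofReal_nonneg hs.le (by positivity),
    Complex.ofReal_pow, Complex.cpow_nat_mul'] <;>
  simp [Complex.arg_ofReal_of_nonneg hr.le, Real.pi_pos, Real.pi_pos.le]

theorem prod_range_mul_one_sub_sub (k : ℕ) (ξ : ℂ) :
    ∏ i ∈ Finset.range k, ((k : ℂ) * (1 - ξ) - i)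
      = ∏ j ∈ Finset.Icc 1 k, ((j : ℂ) - (k : ℂ) * ξ) := by
  rw [← Finset.prod_range_reflect, Finset.range_eq_Ico, ← Finset.Ico_add_one_right_eq_Icc,
    ← Finset.prod_Ico_add' _ 0 k 1]
  refine Finset.prod_congr rfl fun i hi => ?_
  have hik : i + 1 ≤ k := (Finset.mem_Ico.mp hi).2
  rw [Nat.sub_sub, Nat.cast_sub (by omega)]
  push_cast
  ring

/-- Bernstein–Sato identity: for `y₁, y₂ > 0` and `ξ ∈ ℂ`,
`∂_{y₂} ∂_{y₁}^k ((y₂ y₁^k)^{1-ξ}) = b_k(ξ) (y₂ y₁^k)^{-ξ}`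
with `b_k(ξ) = (1-ξ) ∏_{j=1}^k (j - kξ)`. -/
theorem bernstein_sato_identity (k : ℕ) (hk : 1 ≤ k) (ξ : ℂ) (y₁ y₂ : ℝ)
    (h1 : 0 < y₁) (h2 : 0 < y₂) :
    deriv (fun s : ℝ =>
        iteratedDeriv k (fun r : ℝ => ((s * r ^ k : ℝ) : ℂ) ^ (1 - ξ)) y₁) y₂
      = ((1 - ξ) * ∏ j ∈ Finset.Icc 1 k, ((j : ℂ) - (k : ℂ) * ξ)) *
          ((y₂ * y₁ ^ k : ℝ) : ℂ) ^ (-ξ) := by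
  have hev : (fun s : ℝ =>
      iteratedDeriv k (fun r : ℝ => ((s * r ^ k : ℝ) : ℂ) ^ (1 - ξ)) y₁) =ᶠ[nhds y₂]
      fun s : ℝ => (s : ℂ) ^ (1 - ξ) *
        ((∏ j ∈ Finset.Icc 1 k, ((j : ℂ) - (k : ℂ) * ξ)) * (y₁ : ℂ) ^ (k * (1 - ξ) - k)) := by
    filter_upwards [lt_mem_nhds h2] with s hs
    have hr : (fun r : ℝ => ((s * r ^ k : ℝ) : ℂ) ^ (1 - ξ)) =ᶠ[nhds y₁]
        fun r : ℝ => (s : ℂ) ^ (1 - ξ) * (r : ℂ) ^ (k * (1 - ξ)) := by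
      filter_upwards [lt_mem_nhds h1] with r hr using ofReal_mul_pow_cpow hs hr k _
    rw [hr.iteratedDeriv_eq, iteratedDeriv_const_mul_field,
      iteratedDeriv_ofReal_cpow_of_pos _ _ h1, prod_range_mul_one_sub_sub]
  rw [hev.deriv_eq, ((hasDerivAt_ofReal_cpow_of_pos h2 (1 - ξ)).mul_const _).deriv,
    ofReal_mul_pow_cpow h2 h1, show (1 - ξ - 1 : ℂ) = -ξ by ring,
    show (k * (1 - ξ) - k : ℂ) = k * -ξ by ring]
  ring
end

section
/- Define, for z > 0, I(z) = ∫_{ℝ²} e^{−(x²+y²)} / (1 + z² (x² − y²)²) dx dy. Then I(z) is asymptotically equivalent to π log z / z as z → ∞; that is, lim_{z→∞} z I(z) / log z = π. -/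
open Filter

open MeasureTheory Set

/-- A smooth antiderivative, on the whole line, of `k / (1 + (k² - 1) cos² φ)`. -/
lemma hasDerivAt_sub_arctan_sin_mul_cos {k : ℝ} (hk : 0 < k) (φ : ℝ) :
    HasDerivAt (fun φ => φ - Real.arctan ((k - 1) * (Real.sin φ * Real.cos φ) /
        (k * Real.cos φ ^ 2 + Real.sin φ ^ 2)))
      (k / (1 + (k ^ 2 - 1) * Real.cos φ ^ 2)) φ := by
  have hsc := Real.sin_sq_add_cos_sq φ
  have hs := Real.hasDerivAt_sin φ
  have hc := Real.hasDerivAt_cos φ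
  have hD : 0 < k * Real.cos φ ^ 2 + Real.sin φ ^ 2 := by
    rcases eq_or_ne (Real.cos φ) 0 with h | h
    · rw [h] at hsc ⊢
      nlinarith
    · positivity
  have hE : 0 < k ^ 2 * Real.cos φ ^ 2 + Real.sin φ ^ 2 := by
    rcases eq_or_ne (Real.cos φ) 0 with h | h
    · rw [h] at hsc ⊢
      nlinarith
    · positivity
  have hE' : 1 + (k ^ 2 - 1) * Real.cos φ ^ 2 = k ^ 2 * Real.cos φ ^ 2 + Real.sin φ ^ 2 := by
    linear_combination -hsc
  have key := (hasDerivAt_id φ).sub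
    ((((hs.mul hc).const_mul (k - 1)).div (((hc.pow 2).const_mul k).add (hs.pow 2)) hD.ne').arctan)
  refine key.congr_deriv ?_
  simp only [Pi.mul_apply, Pi.add_apply, Pi.pow_apply, Pi.div_apply]
  rw [hE']
  generalize Real.sin φ = s at *
  generalize Real.cos φ = c at *
  have hsum : 1 + ((k - 1) * (s * c) / (k * c ^ 2 + s ^ 2)) ^ 2 =
      (k ^ 2 * c ^ 2 + s ^ 2) / (k * c ^ 2 + s ^ 2) ^ 2 := by
    field_simp
    linear_combination (k ^ 2 * c ^ 2 + s ^ 2) * hsc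
  rw [hsum]
  field_simp
  simp only [Nat.cast_ofNat, Nat.add_one_sub_one, pow_one]
  linear_combination (k * (s ^ 2 + c ^ 2 + 1) - k ^ 2 * c ^ 2 - s ^ 2) * hsc

lemma integral_inv_one_add_mul_cos_two_mul_sq (a : ℝ) :
    ∫ θ in Ioo (-Real.pi) Real.pi, (1 + a ^ 2 * Real.cos (2 * θ) ^ 2)⁻¹ =
      2 * Real.pi / √(1 + a ^ 2) := by
  have hk : 0 < √(1 + a ^ 2) := by positivity
  have hk2 : √(1 + a ^ 2) ^ 2 - 1 = a ^ 2 := by rw [Real.sq_sqrt (by positivity)]; ring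
  have hpi := Real.pi_pos
  rw [← integral_Ioc_eq_integral_Ioo, ← intervalIntegral.integral_of_le (by linarith),
    intervalIntegral.integral_comp_mul_left (fun φ => (1 + a ^ 2 * Real.cos φ ^ 2)⁻¹) two_ne_zero]
  have hcont : Continuous fun φ => √(1 + a ^ 2) / (1 + a ^ 2 * Real.cos φ ^ 2) :=
    continuous_const.div (by fun_prop) fun φ => by positivity
  have h := intervalIntegral.integral_eq_sub_of_hasDerivAt
    (a := 2 * -Real.pi) (b := 2 * Real.pi)
    (fun φ _ => hasDerivAt_sub_arctan_sin_mul_cos hk φ)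
    (by simp only [hk2]; exact hcont.intervalIntegrable _ _)
  simp only [hk2, div_eq_mul_inv, intervalIntegral.integral_const_mul] at h
  simp at h
  rw [smul_eq_mul, eq_div_iff hk.ne', mul_neg]
  linear_combination h / 2

lemma integral_exp_neg_div_eq_integral_radial (z : ℝ) :
    ∫ p : ℝ × ℝ, Real.exp (-(p.1 ^ 2 + p.2 ^ 2)) / (1 + z ^ 2 * (p.1 ^ 2 - p.2 ^ 2) ^ 2) =
      ∫ r in Ioi (0 : ℝ), r * Real.exp (-r ^ 2) * (2 * Real.pi / √(1 + (z * r ^ 2) ^ 2)) := by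
  rw [← integral_comp_polarCoord_symm]
  have hpolar (p : ℝ × ℝ) : p.1 • (Real.exp (-((polarCoord.symm p).1 ^ 2 +
        (polarCoord.symm p).2 ^ 2)) / (1 + z ^ 2 * ((polarCoord.symm p).1 ^ 2 -
        (polarCoord.symm p).2 ^ 2) ^ 2)) =
      p.1 * Real.exp (-p.1 ^ 2) * (1 + (z * p.1 ^ 2) ^ 2 * Real.cos (2 * p.2) ^ 2)⁻¹ := by
    have h1 : (p.1 * Real.cos p.2) ^ 2 + (p.1 * Real.sin p.2) ^ 2 = p.1 ^ 2 := by
      linear_combination p.1 ^ 2 * Real.sin_sq_add_cos_sq p.2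
    have h2 : (p.1 * Real.cos p.2) ^ 2 - (p.1 * Real.sin p.2) ^ 2 =
        p.1 ^ 2 * Real.cos (2 * p.2) := by
      rw [Real.cos_two_mul']; ring
    simp only [polarCoord_symm_apply, smul_eq_mul, h1, h2]
    rw [div_eq_mul_inv, mul_assoc]
    ring_nf
  simp only [hpolar]
  change ∫ p in Ioi (0 : ℝ) ×ˢ Ioo (-Real.pi) Real.pi, _ = _
  rw [Measure.volume_eq_prod, setIntegral_prod]
  · simp only [integral_const_mul, integral_inv_one_add_mul_cos_two_mul_sq]
  · have hr : Integrable (fun r : ℝ => r * Real.exp (-r ^ 2)) := by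
      simpa using integrable_mul_exp_neg_mul_sq one_pos
    rw [IntegrableOn, ← Measure.prod_restrict]
    refine (hr.restrict.mul_prod
      (integrable_const (1 : ℝ) (μ := volume.restrict (Ioo (-Real.pi) Real.pi)))).mono ?_ ?_
    · refine Continuous.aestronglyMeasurable ?_
      exact (by fun_prop : Continuous fun p : ℝ × ℝ => p.1 * Real.exp (-p.1 ^ 2)).mul
        (Continuous.inv₀ (by fun_prop) fun p => by positivity)
    · refine ae_of_all _ fun p => ?_
      rw [norm_mul, norm_mul _ (1 : ℝ)]
      gcongr
      rw [norm_inv, norm_one]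
      refine inv_le_one_of_one_le₀ ?_
      rw [Real.norm_of_nonneg (by positivity)]
      have : 0 ≤ (z * p.1 ^ 2) ^ 2 * Real.cos (2 * p.2) ^ 2 := by positivity
      linarith

lemma arsinh_le_log_one_add_two_mul {x : ℝ} (hx : 0 ≤ x) :
    Real.arsinh x ≤ Real.log (1 + 2 * x) := by
  have h : √(1 + x ^ 2) ≤ 1 + x := Real.sqrt_le_iff.2 ⟨by positivity, by nlinarith⟩
  exact Real.log_le_log (by positivity) (by linarith)

lemma log_le_arsinh {x : ℝ} (hx : 0 < x) : Real.log x ≤ Real.arsinh x :=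
  Real.log_le_log hx (by linarith [Real.sqrt_nonneg (1 + x ^ 2)])

lemma arsinh_mul_le {z s : ℝ} (hz : 1 ≤ z) (hs : 0 ≤ s) :
    Real.arsinh (z * s) ≤ Real.log z + Real.log (1 + 2 * s) := by
  rw [← Real.log_mul (by positivity) (by positivity)]
  exact (arsinh_le_log_one_add_two_mul (by positivity)).trans
    (Real.log_le_log (by positivity) (by nlinarith))

lemma integrableOn_pow_mul_exp_neg_sq (n : ℕ) :
    IntegrableOn (fun r : ℝ => r ^ n * Real.exp (-r ^ 2)) (Ioi 0) := by
  have h := integrableOn_rpow_mul_exp_neg_mul_sq one_pos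
    (show (-1 : ℝ) < n by linarith [n.cast_nonneg (α := ℝ)])
  simpa [Real.rpow_natCast] using h

/-- Integration by parts against `arsinh (z r²)`. -/
lemma integral_exp_neg_sq_div_sqrt {z : ℝ} (hz : 1 ≤ z) :
    z * ∫ r in Ioi (0 : ℝ), r * Real.exp (-r ^ 2) * (2 * Real.pi / √(1 + (z * r ^ 2) ^ 2)) =
      Real.pi * ∫ r in Ioi (0 : ℝ), 2 * r * Real.exp (-r ^ 2) * Real.arsinh (z * r ^ 2) := by
  have hz0 : 0 < z := by linarith
  have harsinh (r : ℝ) : Real.arsinh (z * r ^ 2) ≤ 2 * z * r ^ 2 := by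
    have h := Real.log_le_sub_one_of_pos (show 0 < 1 + 2 * (z * r ^ 2) by positivity)
    linarith [arsinh_le_log_one_add_two_mul (show 0 ≤ z * r ^ 2 by positivity)]
  have hnonneg (r : ℝ) : 0 ≤ Real.arsinh (z * r ^ 2) := Real.arsinh_nonneg_iff.2 (by positivity)
  have hsq (r : ℝ) : HasDerivAt (fun r : ℝ => r ^ 2) (2 * r) r := by
    simpa using hasDerivAt_pow 2 r
  have hderiv (r : ℝ) : HasDerivAt (fun r => Real.exp (-r ^ 2) * Real.arsinh (z * r ^ 2))
      (2 * z * (r * Real.exp (-r ^ 2) * (√(1 + (z * r ^ 2) ^ 2))⁻¹) -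
        2 * r * Real.exp (-r ^ 2) * Real.arsinh (z * r ^ 2)) r := by
    refine ((hsq r).neg.exp.mul ((hsq r).const_mul z).arsinh).congr_deriv ?_
    simp only [Pi.neg_apply, smul_eq_mul]
    ring
  have hint1 : IntegrableOn
      (fun r => 2 * z * (r * Real.exp (-r ^ 2) * (√(1 + (z * r ^ 2) ^ 2))⁻¹)) (Ioi 0) := by
    refine Integrable.const_mul ?_ _
    refine Integrable.mono (integrableOn_pow_mul_exp_neg_sq 1) ?_ (ae_of_all _ fun r => ?_)
    · refine Continuous.aestronglyMeasurable ?_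
      exact (by fun_prop : Continuous fun r : ℝ => r * Real.exp (-r ^ 2)).mul
        (Continuous.inv₀ (by fun_prop) fun r => by positivity)
    · rw [norm_mul, pow_one]
      refine mul_le_of_le_one_right (norm_nonneg _) ?_
      rw [Real.norm_of_nonneg (by positivity)]
      refine inv_le_one_of_one_le₀ (Real.one_le_sqrt.2 ?_)
      linarith [sq_nonneg (z * r ^ 2)]
  have hint2 : IntegrableOn
      (fun r => 2 * r * Real.exp (-r ^ 2) * Real.arsinh (z * r ^ 2)) (Ioi 0) := by
    refine Integrable.mono' ((integrableOn_pow_mul_exp_neg_sq 3).const_mul (4 * z)) ?_ ?_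
    · refine Continuous.aestronglyMeasurable ?_
      exact (by fun_prop : Continuous fun r : ℝ => 2 * r * Real.exp (-r ^ 2)).mul
        (Continuous.arsinh (by fun_prop))
    · refine (ae_restrict_mem measurableSet_Ioi).mono fun r (hr : 0 < r) => ?_
      have := hnonneg r
      rw [Real.norm_of_nonneg (by positivity)]
      calc 2 * r * Real.exp (-r ^ 2) * Real.arsinh (z * r ^ 2)
          ≤ 2 * r * Real.exp (-r ^ 2) * (2 * z * r ^ 2) := by gcongr; exact harsinh r
        _ = 4 * z * (r ^ 3 * Real.exp (-r ^ 2)) := by ring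
  have hlim : Tendsto (fun r => Real.exp (-r ^ 2) * Real.arsinh (z * r ^ 2)) atTop (nhds 0) := by
    have h := (((Real.tendsto_pow_mul_exp_neg_atTop_nhds_zero 1).comp
      (tendsto_pow_atTop (α := ℝ) two_ne_zero)).const_mul (2 * z))
    rw [mul_zero] at h
    refine squeeze_zero (fun r => mul_nonneg (Real.exp_nonneg _) (hnonneg r)) (fun r => ?_) h
    calc Real.exp (-r ^ 2) * Real.arsinh (z * r ^ 2)
        ≤ Real.exp (-r ^ 2) * (2 * z * r ^ 2) := by gcongr; exact harsinh r
      _ = _ := by simp only [Function.comp_apply]; ring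
  have hparts := integral_Ioi_of_hasDerivAt_of_tendsto' (a := 0) (fun r _ => hderiv r)
    (hint1.sub hint2) hlim
  rw [integral_sub hint1 hint2, integral_const_mul] at hparts
  have hpull : ∫ r in Ioi (0 : ℝ), r * Real.exp (-r ^ 2) *
      (2 * Real.pi / √(1 + (z * r ^ 2) ^ 2)) =
      2 * Real.pi * ∫ r in Ioi (0 : ℝ), r * Real.exp (-r ^ 2) * (√(1 + (z * r ^ 2) ^ 2))⁻¹ := by
    rw [← integral_const_mul]
    congr 1 with r
    ring
  rw [hpull]
  simp at hparts
  linear_combination Real.pi * hparts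

lemma integral_two_mul_mul_exp_neg_sq :
    ∫ r in Ioi (0 : ℝ), 2 * r * Real.exp (-r ^ 2) = 1 := by
  have h := integral_rpow_mul_exp_neg_mul_rpow (p := 2) (q := 1) (b := 1)
    two_pos (by norm_num) one_pos
  norm_num at h
  simp only [mul_assoc, integral_const_mul, h]
  norm_num

lemma tendsto_arsinh_mul_div_log {s : ℝ} (hs : 0 < s) :
    Tendsto (fun z => Real.arsinh (z * s) / Real.log z) atTop (nhds 1) := by
  have hconst (c : ℝ) : Tendsto (fun z => 1 + c / Real.log z) atTop (nhds 1) := by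
    simpa using (Real.tendsto_log_atTop.const_div_atTop c).const_add 1
  refine tendsto_of_tendsto_of_tendsto_of_le_of_le' (hconst (Real.log s))
    (hconst (Real.log (1 + 2 * s))) ?_ ?_
  all_goals
    filter_upwards [eventually_gt_atTop 1] with z hz
    have hlog := Real.log_pos hz
    rw [one_add_div hlog.ne']
    gcongr
  · rw [← Real.log_mul (by positivity) hs.ne']
    exact log_le_arsinh (by positivity)
  · exact arsinh_mul_le hz.le hs.le

lemma tendsto_integral_arsinh_div_log :
    Tendsto (fun z => ∫ r in Ioi (0 : ℝ),
        2 * r * Real.exp (-r ^ 2) * (Real.arsinh (z * r ^ 2) / Real.log z))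
      atTop (nhds 1) := by
  rw [← integral_two_mul_mul_exp_neg_sq]
  refine tendsto_integral_filter_of_dominated_convergence
    (fun r => 2 * (r ^ 1 * Real.exp (-r ^ 2)) + 4 * (r ^ 3 * Real.exp (-r ^ 2))) ?_ ?_ ?_ ?_
  · refine Eventually.of_forall fun z => Continuous.aestronglyMeasurable ?_
    exact (by fun_prop : Continuous fun r : ℝ => 2 * r * Real.exp (-r ^ 2)).mul
      ((Continuous.arsinh (by fun_prop)).div_const _)
  · filter_upwards [eventually_ge_atTop (Real.exp 1)] with z hz
    have hz0 : 0 < z := (Real.exp_pos 1).trans_le hz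
    have hz1 : 1 ≤ z := (Real.one_le_exp zero_le_one).trans hz
    have hlog : 1 ≤ Real.log z := (Real.le_log_iff_exp_le hz0).2 hz
    refine (ae_restrict_mem measurableSet_Ioi).mono fun r (hr : 0 < r) => ?_
    have hnonneg : 0 ≤ Real.arsinh (z * r ^ 2) := Real.arsinh_nonneg_iff.2 (by positivity)
    rw [Real.norm_of_nonneg (by positivity)]
    have hle : Real.arsinh (z * r ^ 2) / Real.log z ≤ 1 + 2 * r ^ 2 := by
      rw [div_le_iff₀ (by positivity)]
      have h1 := arsinh_mul_le hz1 (sq_nonneg r)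
      have h2 := Real.log_le_sub_one_of_pos (show 0 < 1 + 2 * r ^ 2 by positivity)
      nlinarith [sq_nonneg r]
    calc _ ≤ 2 * r * Real.exp (-r ^ 2) * (1 + 2 * r ^ 2) := by gcongr
      _ = _ := by ring
  · exact ((integrableOn_pow_mul_exp_neg_sq 1).const_mul 2).add
      ((integrableOn_pow_mul_exp_neg_sq 3).const_mul 4)
  · refine (ae_restrict_mem measurableSet_Ioi).mono fun r (hr : 0 < r) => ?_
    simpa using (tendsto_arsinh_mul_div_log (pow_pos hr 2)).const_mul (2 * r * Real.exp (-r ^ 2))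

/-- The conical-singularity example: `I(z) = ∫_{ℝ²} e^{-(x²+y²)}/(1+z²(x²-y²)²) dx dy`
is asymptotically equivalent to `π log z / z` as `z → ∞`. -/
theorem conical_singularity_log_asymptotics :
    Tendsto (fun z : ℝ =>
        z * (∫ p : ℝ × ℝ,
          Real.exp (-(p.1 ^ 2 + p.2 ^ 2)) / (1 + z ^ 2 * (p.1 ^ 2 - p.2 ^ 2) ^ 2))
          / Real.log z)
      atTop (nhds Real.pi) := by
  have h := tendsto_integral_arsinh_div_log.const_mul Real.pi
  rw [mul_one] at h
  refine h.congr' ?_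
  filter_upwards [eventually_ge_atTop 1] with z hz
  rw [integral_exp_neg_div_eq_integral_radial, integral_exp_neg_sq_div_sqrt hz, mul_div_assoc,
    ← integral_div]
  simp only [mul_div_assoc]
end

section
/- Define, for z > 0, Ĩ(z) = ∫_{ℝ²} e^{−(x²+y²)} / (1 + z² (x⁴ − y⁴)²) dx dy. Then lim_{z→∞} √z · Ĩ(z) = π ∫_0^∞ du / √(1 + u⁴). -/
open Filter MeasureTheory Set

/-- The angular integral over a full period, computed with the globally smooth antiderivative
`θ / c - arctan ((c - 1) sin 2θ cos 2θ / (c cos² 2θ + sin² 2θ)) / (2 c)`, `c = √(1 + a²)`. -/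
lemma integral_inv_one_add_sq_mul_cos_two_mul_sq (a : ℝ) :
    ∫ θ in Ioo (-Real.pi) Real.pi, 1 / (1 + a ^ 2 * Real.cos (2 * θ) ^ 2)
      = 2 * Real.pi / Real.sqrt (1 + a ^ 2) := by
  have hpos : 0 < 1 + a ^ 2 := by positivity
  set c := Real.sqrt (1 + a ^ 2) with hc
  have hc0 : 0 < c := Real.sqrt_pos.mpr hpos
  have hc2 : a ^ 2 = c ^ 2 - 1 := by rw [hc, Real.sq_sqrt hpos.le]; ring
  have hD (θ : ℝ) : 0 < c * Real.cos (2 * θ) ^ 2 + Real.sin (2 * θ) ^ 2 := by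
    have h := Real.sin_sq_add_cos_sq (2 * θ)
    rcases (sq_nonneg (Real.cos (2 * θ))).eq_or_lt with h0 | h0
    · rw [← h0] at h ⊢
      linarith
    · positivity
  have hderiv (θ : ℝ) : HasDerivAt
      (fun θ => θ / c - Real.arctan ((c - 1) * (Real.sin (2 * θ) * Real.cos (2 * θ)) /
        (c * Real.cos (2 * θ) ^ 2 + Real.sin (2 * θ) ^ 2)) / (2 * c))
      (1 / (1 + a ^ 2 * Real.cos (2 * θ) ^ 2)) θ := by
    have h2 : HasDerivAt (fun θ : ℝ => 2 * θ) 2 θ := by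
      simpa using (hasDerivAt_id θ).const_mul 2
    have hs := h2.sin
    have hcos := h2.cos
    have hq := (((hs.mul hcos).const_mul (c - 1)).div
      (((hcos.pow 2).const_mul c).add (hs.pow 2)) (hD θ).ne')
    have h := ((hasDerivAt_id θ).div_const c).sub (hq.arctan.div_const (2 * c))
    refine h.congr_deriv ?_
    have hDθ := hD θ
    have hden : 0 < 1 + (c ^ 2 - 1) * Real.cos (2 * θ) ^ 2 := by
      rw [← hc2]; positivity
    rw [hc2]
    have hsc := Real.sin_sq_add_cos_sq (2 * θ)
    simp only [Pi.mul_apply, Pi.add_apply, Pi.pow_apply, Pi.div_apply]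
    generalize Real.sin (2 * θ) = s at *
    generalize Real.cos (2 * θ) = k at *
    have hs2 : s ^ 2 = 1 - k ^ 2 := by linarith
    have hsum : (c * k ^ 2 + s ^ 2) ^ 2 + ((c - 1) * (s * k)) ^ 2
        = 1 + (c ^ 2 - 1) * k ^ 2 := by
      have : ((c - 1) * (s * k)) ^ 2 = (c - 1) ^ 2 * s ^ 2 * k ^ 2 := by ring
      rw [this, hs2]; ring
    have hfac : 1 + ((c - 1) * (s * k) / (c * k ^ 2 + s ^ 2)) ^ 2
        = (1 + (c ^ 2 - 1) * k ^ 2) / (c * k ^ 2 + s ^ 2) ^ 2 := by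
      rw [← hsum]; field_simp
    rw [hfac]
    field_simp
    ring_nf
    have hs4 : s ^ 4 = (1 - k ^ 2) ^ 2 := by rw [← hs2]; ring
    rw [hs4, hs2]
    ring
  rw [← integral_Ioc_eq_integral_Ioo,
    ← intervalIntegral.integral_of_le (by linarith [Real.pi_pos]),
    intervalIntegral.integral_eq_sub_of_hasDerivAt (fun θ _ => hderiv θ)]
  · simp only [mul_neg, Real.sin_neg, Real.sin_two_pi]
    simp
    ring
  · apply Continuous.intervalIntegrable
    exact continuous_const.div (by fun_prop) fun θ => by positivity

lemma integrableOn_one_div_sqrt_one_add_pow_four :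
    IntegrableOn (fun u : ℝ => 1 / Real.sqrt (1 + u ^ 4)) (Ioi 0) := by
  refine Integrable.mono' ((integrable_inv_one_add_sq.const_mul 2).integrableOn)
    (Measurable.aestronglyMeasurable (by fun_prop)) (ae_of_all _ fun u => ?_)
  have h : (1 + u ^ 2) / 2 ≤ Real.sqrt (1 + u ^ 4) :=
    Real.le_sqrt_of_sq_le (by nlinarith [sq_nonneg (u ^ 2 - 1), sq_nonneg (u ^ 2)])
  rw [Real.norm_of_nonneg (by positivity)]
  calc 1 / Real.sqrt (1 + u ^ 4) ≤ 1 / ((1 + u ^ 2) / 2) :=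
        one_div_le_one_div_of_le (by positivity) h
    _ = 2 * (1 + u ^ 2)⁻¹ := by field_simp

/-- Integrating out the angle in polar coordinates. -/
lemma integral_quartic_eq_radial (z : ℝ) :
    ∫ p : ℝ × ℝ, Real.exp (-(p.1 ^ 2 + p.2 ^ 2)) / (1 + z ^ 2 * (p.1 ^ 4 - p.2 ^ 4) ^ 2)
      = ∫ r in Ioi (0 : ℝ), r * Real.exp (-r ^ 2) *
          (2 * Real.pi / Real.sqrt (1 + (z * r ^ 4) ^ 2)) := by
  have hpolar (p : ℝ × ℝ) : p.1 • (Real.exp (-((polarCoord.symm p).1 ^ 2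
        + (polarCoord.symm p).2 ^ 2)) /
        (1 + z ^ 2 * ((polarCoord.symm p).1 ^ 4 - (polarCoord.symm p).2 ^ 4) ^ 2))
      = p.1 * Real.exp (-p.1 ^ 2) *
        (1 / (1 + (z * p.1 ^ 4) ^ 2 * Real.cos (2 * p.2) ^ 2)) := by
    have hsc := Real.sin_sq_add_cos_sq p.2
    have h2 : (p.1 * Real.cos p.2) ^ 2 + (p.1 * Real.sin p.2) ^ 2 = p.1 ^ 2 := by
      linear_combination p.1 ^ 2 * hsc
    have h4 : (p.1 * Real.cos p.2) ^ 4 - (p.1 * Real.sin p.2) ^ 4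
        = p.1 ^ 4 * Real.cos (2 * p.2) := by
      rw [Real.cos_two_mul']
      linear_combination p.1 ^ 4 * (Real.cos p.2 ^ 2 - Real.sin p.2 ^ 2) * hsc
    simp only [polarCoord_symm_apply, h2, h4, smul_eq_mul]
    ring
  rw [← integral_comp_polarCoord_symm]
  simp only [hpolar]
  rw [polarCoord_target, Measure.volume_eq_prod, setIntegral_prod]
  · simp only [integral_const_mul, integral_inv_one_add_sq_mul_cos_two_mul_sq]
  · have hr : IntegrableOn (fun r : ℝ => r * Real.exp (-r ^ 2)) (Ioi 0) := by
      simpa using (integrable_mul_exp_neg_mul_sq one_pos).integrableOn (s := Ioi 0)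
    have hθ : IntegrableOn (fun _ : ℝ => (1 : ℝ)) (Ioo (-Real.pi) Real.pi) := by simp
    have hdom := Integrable.mul_prod hr hθ
    rw [IntegrableOn, ← Measure.prod_restrict]
    refine hdom.mono (Measurable.aestronglyMeasurable (by fun_prop)) (ae_of_all _ fun p => ?_)
    rw [norm_mul, norm_mul _ (1 : ℝ)]
    gcongr
    rw [Real.norm_of_nonneg (by positivity), norm_one]
    exact div_le_one_of_le₀ (le_add_of_nonneg_right (by positivity)) (by positivity)

/-- The substitution `u = √z r²` in the radial integral. -/
lemma sqrt_mul_integral_radial {z : ℝ} (hz : 0 < z) :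
    Real.sqrt z * ∫ r in Ioi (0 : ℝ), r * Real.exp (-r ^ 2) *
        (2 * Real.pi / Real.sqrt (1 + (z * r ^ 4) ^ 2))
      = Real.pi * ∫ u in Ioi (0 : ℝ),
          Real.exp (-((Real.sqrt z)⁻¹ * u)) * (1 / Real.sqrt (1 + u ^ 4)) := by
  have hs : 0 < Real.sqrt z := Real.sqrt_pos.mpr hz
  have hsq : Real.sqrt z ^ 2 = z := Real.sq_sqrt hz.le
  have hscale := integral_comp_mul_left_Ioi (fun u : ℝ =>
    Real.exp (-((Real.sqrt z)⁻¹ * u)) * (1 / Real.sqrt (1 + u ^ 4))) 0 hs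
  have hpow := integral_comp_rpow_Ioi_of_pos (g := fun x : ℝ =>
    Real.exp (-((Real.sqrt z)⁻¹ * (Real.sqrt z * x))) *
      (1 / Real.sqrt (1 + (Real.sqrt z * x) ^ 4))) (p := 2) two_pos
  rw [mul_zero] at hscale
  rw [hscale] at hpow
  have hcongr : ∫ r in Ioi (0 : ℝ), r * Real.exp (-r ^ 2) *
        (2 * Real.pi / Real.sqrt (1 + (z * r ^ 4) ^ 2))
      = Real.pi * ∫ x in Ioi (0 : ℝ), ((2 : ℝ) * x ^ ((2 : ℝ) - 1)) •
        (Real.exp (-((Real.sqrt z)⁻¹ * (Real.sqrt z * x ^ (2 : ℝ)))) *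
          (1 / Real.sqrt (1 + (Real.sqrt z * x ^ (2 : ℝ)) ^ 4))) := by
    rw [← integral_const_mul]
    refine setIntegral_congr_fun measurableSet_Ioi fun r _ => ?_
    have h1 : (2 : ℝ) - 1 = 1 := by norm_num
    have h4 : (Real.sqrt z * r ^ 2) ^ 4 = (z * r ^ 4) ^ 2 := by
      rw [← hsq]; simp only [Real.sqrt_sq hs.le]; ring
    simp only [h1, Real.rpow_one, Real.rpow_two, smul_eq_mul, h4, inv_mul_cancel_left₀ hs.ne']
    ring
  rw [hcongr, hpow, smul_eq_mul]
  field_simp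

/-- The degree-4 singularity example: `√z · ∫_{ℝ²} e^{-(x²+y²)}/(1+z²(x⁴-y⁴)²) dx dy`
tends to `π ∫_0^∞ du/√(1+u⁴)` as `z → ∞`. -/
theorem quartic_singularity_asymptotics :
    Tendsto (fun z : ℝ =>
        Real.sqrt z * ∫ p : ℝ × ℝ,
          Real.exp (-(p.1 ^ 2 + p.2 ^ 2)) / (1 + z ^ 2 * (p.1 ^ 4 - p.2 ^ 4) ^ 2))
      atTop (nhds (Real.pi * ∫ u in Set.Ioi (0:ℝ), 1 / Real.sqrt (1 + u ^ 4))) := by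
  have hlim : Tendsto (fun z : ℝ => Real.pi * ∫ u in Ioi (0 : ℝ),
      Real.exp (-((Real.sqrt z)⁻¹ * u)) * (1 / Real.sqrt (1 + u ^ 4))) atTop
      (nhds (Real.pi * ∫ u in Ioi (0 : ℝ), 1 / Real.sqrt (1 + u ^ 4))) := by
    refine Tendsto.const_mul _ ?_
    refine tendsto_integral_filter_of_dominated_convergence
      (fun u : ℝ => 1 / Real.sqrt (1 + u ^ 4)) ?_ ?_
      integrableOn_one_div_sqrt_one_add_pow_four ?_
    · exact Eventually.of_forall fun z => Measurable.aestronglyMeasurable (by fun_prop)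
    · refine Eventually.of_forall fun z => (ae_restrict_mem measurableSet_Ioi).mono fun u hu => ?_
      have hu0 : 0 ≤ u := le_of_lt hu
      rw [Real.norm_of_nonneg (by positivity)]
      refine mul_le_of_le_one_left (by positivity) (Real.exp_le_one_iff.mpr ?_)
      exact neg_nonpos.mpr (by positivity)
    · refine ae_of_all _ fun u => ?_
      have h := ((tendsto_inv_atTop_zero.comp
        Real.tendsto_sqrt_atTop).mul_const u).neg.rexp.mul_const (1 / Real.sqrt (1 + u ^ 4))
      simpa using h
  refine hlim.congr' ((eventually_gt_atTop 0).mono fun z hz => ?_)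
  beta_reduce
  rw [integral_quartic_eq_radial, sqrt_mul_integral_radial hz]
end
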